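/- Let F be a field with char F ≠ 2 and n ≥ 1. Let g ∈ Sp(2n, F) be a monomial matrix with permutation σ, and suppose every orbit of σ on the 2n indices is invariant under the involution τ exchanging i and i + n (indices mod 2n). Let k be the order of σ. Then g^{k} is a scalar matrix (necessarily equal to 1 or −1) if and only if the cardinalities of all orbits of σ have the same 2-adic valuation. -/

import Mathlib

open Matrix

/-- A matrix is monomial with permutation `σ` if its nonzero entries are exactly the
entries `(σ j, j)`, each of which is a unit. -/
def IsMonomial {n : Type*} [Fintype n] [DecidableEq n] {F : Type*} [Field F]
    (g : Matrix n n F) (σ : Equiv.Perm n) : Prop :=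
  ∃ c : n → Fˣ, ∀ i j, g i j = if i = σ j then (c j : F) else 0

/-!
On an orbit of `σ` of length `m`, the involution `τ` acts as `σ ^ (m / 2)`. Hence `g ^ (m / 2)`
exchanges, up to units, the two vectors of a hyperbolic pair, and skew-symmetry of the form makes
its square `g ^ m` act on that orbit by `-1`. So `g ^ k` is diagonal with entries `(-1) ^ (k / m)`,
and `k`, being the least common multiple of the orbit lengths, has the same `2`-adic valuation as
at least one of them: `g ^ k` is scalar if and only if every index `k / m` is odd.
-/

section Period

theorem two_mul_mod_eq_of_dvd_two_mul {m a : ℕ} (h : m ∣ 2 * a) (ha : ¬m ∣ a) :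
    2 * (a % m) = m := by
  have hm : 0 < m := Nat.pos_of_ne_zero (by rintro rfl; simp_all)
  have hdvd : m ∣ 2 * (a % m) := (((Nat.mod_modEq a m).mul_left 2).dvd_iff dvd_rfl).2 h
  have hne : 2 * (a % m) ≠ 0 := mul_ne_zero two_ne_zero (mt Nat.dvd_of_mod_eq_zero ha)
  exact Nat.eq_of_dvd_of_lt_two_mul hne hdvd (Nat.mul_lt_mul_of_pos_left (Nat.mod_lt a hm) two_pos)

theorem exists_two_mul_eq_minimalPeriod_and_iterate_eq {α : Type*} {f τ : α → α}
    (hcomm : Function.Commute f τ) {x : α} (hinv : τ (τ x) = x) (hne : τ x ≠ x) {a : ℕ}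
    (ha : f^[a] x = τ x) : ∃ b, 2 * b = Function.minimalPeriod f x ∧ f^[b] x = τ x := by
  have h2a : Function.IsPeriodicPt f (2 * a) x := by
    rw [Function.IsPeriodicPt, Function.IsFixedPt, two_mul, Function.iterate_add_apply, ha,
      (hcomm.iterate_left a).eq, ha, hinv]
  have hna : ¬Function.IsPeriodicPt f a x := fun h => hne (ha.symm.trans h)
  rw [Function.isPeriodicPt_iff_minimalPeriod_dvd] at h2a hna
  exact ⟨a % Function.minimalPeriod f x, two_mul_mod_eq_of_dvd_two_mul h2a hna,
    Function.iterate_mod_minimalPeriod_eq.trans ha⟩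

variable {M α : Type*} [Monoid M] [MulAction M α] {g : M} {p : ℕ}

theorem exists_not_dvd_orderOf_div_period [FaithfulSMul M α] [Nonempty α] (hg : IsOfFinOrder g)
    (hp : p ≠ 1) : ∃ a : α, ¬p ∣ orderOf g / MulAction.period g a := by
  by_contra! hdvd
  have hpdvd : p ∣ orderOf g :=
    (hdvd (Classical.arbitrary α)).trans (Nat.div_dvd_of_dvd (MulAction.period_dvd_orderOf g _))
  have hone : g ^ (orderOf g / p) = 1 := by
    refine FaithfulSMul.eq_of_smul_eq_smul (α := α) fun a => ?_
    rw [one_smul, MulAction.pow_smul_eq_iff_period_dvd, Nat.dvd_div_iff_mul_dvd hpdvd, mul_comm]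
    exact (Nat.dvd_div_iff_mul_dvd (MulAction.period_dvd_orderOf g a)).1 (hdvd a)
  have hpos : 0 < p := Nat.pos_of_dvd_of_pos hpdvd hg.orderOf_pos
  have hlt : orderOf g / p < orderOf g := Nat.div_lt_self hg.orderOf_pos (by omega)
  have hdiv : 0 < orderOf g / p := Nat.div_pos (Nat.le_of_dvd hg.orderOf_pos hpdvd) hpos
  exact hlt.not_ge (Nat.le_of_dvd hdiv (orderOf_dvd_of_pow_eq_one hone))

theorem not_dvd_orderOf_div_period_iff [Fact p.Prime] (hg : IsOfFinOrder g) (a : α) :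
    ¬p ∣ orderOf g / MulAction.period g a ↔
      padicValNat p (MulAction.period g a) = padicValNat p (orderOf g) := by
  have hdvd := MulAction.period_dvd_orderOf g a
  have hle : padicValNat p (MulAction.period g a) ≤ padicValNat p (orderOf g) :=
    (padicValNat_dvd_iff_le hg.orderOf_pos.ne').1 (pow_padicValNat_dvd.trans hdvd)
  have hne : orderOf g / MulAction.period g a ≠ 0 :=
    (Nat.div_pos (Nat.le_of_dvd hg.orderOf_pos hdvd)
      (Nat.pos_of_dvd_of_pos hdvd hg.orderOf_pos)).ne'
  rw [dvd_iff_padicValNat_ne_zero hne, not_not, padicValNat.div_of_dvd hdvd]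
  omega

theorem forall_padicValNat_period_eq_iff [FaithfulSMul M α] [Fact p.Prime] (hg : IsOfFinOrder g) :
    (∀ a b : α, padicValNat p (MulAction.period g a) = padicValNat p (MulAction.period g b)) ↔
      ∀ a : α, ¬p ∣ orderOf g / MulAction.period g a := by
  simp only [not_dvd_orderOf_div_period_iff hg]
  refine ⟨fun h a => ?_, fun h a b => (h a).trans (h b).symm⟩
  have : Nonempty α := ⟨a⟩
  obtain ⟨b, hb⟩ := exists_not_dvd_orderOf_div_period (α := α) hg (Fact.out : p.Prime).ne_one
  exact (h a b).trans ((not_dvd_orderOf_div_period_iff hg b).1 hb)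

end Period

namespace IsMonomial

variable {ι F : Type*} [Fintype ι] [DecidableEq ι] [Field F] {A : Matrix ι ι F}
  {σ : Equiv.Perm ι}

theorem apply_eq_zero (hA : IsMonomial A σ) {i j : ι} (h : i ≠ σ j) : A i j = 0 := by
  obtain ⟨c, hc⟩ := hA
  rw [hc, if_neg h]

theorem diagonal_diag (hA : IsMonomial A 1) : diagonal A.diag = A :=
  IsDiag.diagonal_diag fun _ _ h => hA.apply_eq_zero h

theorem mul_apply {m : Type*} (hA : IsMonomial A σ) (B : Matrix m ι F) (i : m) (j : ι) :
    (B * A) i j = B i (σ j) * A (σ j) j := by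
  rw [Matrix.mul_apply]
  refine Finset.sum_eq_single _ (fun k _ hk => ?_) (by simp)
  rw [hA.apply_eq_zero hk, mul_zero]

theorem transpose_mul_mul_apply {κ : Type*} [Fintype κ] [DecidableEq κ] {B : Matrix κ κ F}
    {π : Equiv.Perm κ} (hA : IsMonomial A σ) (hB : IsMonomial B π) (M : Matrix ι κ F) (i : ι)
    (j : κ) : (Aᵀ * M * B) i j = A (σ i) i * M (σ i) (π j) * B (π j) j := by
  have hAM : (Aᵀ * M) i (π j) = A (σ i) i * M (σ i) (π j) := by
    rw [← transpose_apply (Aᵀ * M), transpose_mul, transpose_transpose, hA.mul_apply,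
      transpose_apply, mul_comm]
  rw [hB.mul_apply, hAM]

theorem one : IsMonomial (1 : Matrix ι ι F) 1 :=
  ⟨1, fun _ _ => Matrix.one_apply⟩

theorem mul {B : Matrix ι ι F} {π : Equiv.Perm ι} (hA : IsMonomial A σ) (hB : IsMonomial B π) :
    IsMonomial (A * B) (σ * π) := by
  have hAB := hB.mul_apply A
  obtain ⟨a, ha⟩ := hA
  obtain ⟨b, hb⟩ := hB
  refine ⟨fun j => a (π j) * b j, fun i j => ?_⟩
  rw [hAB, ha, hb, if_pos rfl, ite_mul, zero_mul, Units.val_mul, Equiv.Perm.mul_apply]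

theorem pow (hA : IsMonomial A σ) (k : ℕ) : IsMonomial (A ^ k) (σ ^ k) := by
  induction k with
  | zero => simpa only [pow_zero] using one
  | succ k ih => simpa only [pow_succ] using ih.mul hA

theorem pow_apply_self (hA : IsMonomial A σ) {i : ι} (hi : σ i = i) (q : ℕ) :
    (A ^ q) i i = A i i ^ q := by
  induction q with
  | zero => simp
  | succ q ih => rw [pow_succ, hA.mul_apply, hi, ih, pow_succ]

end IsMonomial

section J

variable {l R : Type*} [DecidableEq l] [CommRing R]

theorem J_apply_ne_zero_iff [Nontrivial R] {i j : l ⊕ l} : J l R i j ≠ 0 ↔ j = i.swap := by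
  rcases i with i | i <;> rcases j with j | j <;> simp [J, Matrix.one_apply, eq_comm]

theorem J_apply_comm (i j : l ⊕ l) : J l R j i = -J l R i j :=
  congr_fun₂ (J_transpose l R) i j

end J

namespace IsMonomial

variable {l F : Type*} [Fintype l] [DecidableEq l] [Field F] {A : Matrix (l ⊕ l) (l ⊕ l) F}
  {σ : Equiv.Perm (l ⊕ l)} {i : l ⊕ l}

theorem mul_J_mul (hA : IsMonomial A σ) (hsp : A ∈ symplecticGroup l F) (i j : l ⊕ l) :
    A (σ i) i * J l F (σ i) (σ j) * A (σ j) j = J l F i j := by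
  rw [← hA.transpose_mul_mul_apply hA, SymplecticGroup.mem_iff'.1 hsp]

theorem commute_swap (hA : IsMonomial A σ) (hsp : A ∈ symplecticGroup l F) :
    Function.Commute σ Sum.swap := by
  intro i
  have h : J l F i i.swap ≠ 0 := J_apply_ne_zero_iff.2 rfl
  rw [← hA.mul_J_mul hsp] at h
  exact J_apply_ne_zero_iff.1 (right_ne_zero_of_mul (left_ne_zero_of_mul h))

theorem sq_apply_self (hA : IsMonomial A σ) (hsp : A ∈ symplecticGroup l F)
    (hi : σ i = i.swap) : (A ^ 2) i i = -1 := by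
  have hi' : σ i.swap = i := by rw [(hA.commute_swap hsp).eq, hi, Sum.swap_swap]
  have h := hA.mul_J_mul hsp i i.swap
  rw [hi', hi, J_apply_comm i] at h
  rw [pow_two, hA.mul_apply, hi]
  apply mul_right_cancel₀ (J_apply_ne_zero_iff.2 rfl : J l F i i.swap ≠ 0)
  linear_combination -h

theorem pow_minimalPeriod_apply_self (hA : IsMonomial A σ) (hsp : A ∈ symplecticGroup l F)
    (hcyc : σ.SameCycle i i.swap) : (A ^ Function.minimalPeriod σ i) i i = -1 := by
  obtain ⟨a, ha⟩ := hcyc.exists_nat_pow_eq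
  have hne : i.swap ≠ i := by cases i <;> simp
  obtain ⟨b, hb, hbi⟩ := exists_two_mul_eq_minimalPeriod_and_iterate_eq (hA.commute_swap hsp)
    i.swap_swap hne (by rwa [Equiv.Perm.iterate_eq_pow])
  rw [← hb, mul_comm, pow_mul]
  exact (hA.pow b).sq_apply_self (pow_mem hsp b) (by rwa [← Equiv.Perm.iterate_eq_pow])

theorem pow_orderOf_eq_diagonal (hA : IsMonomial A σ) (hsp : A ∈ symplecticGroup l F)
    (hcyc : ∀ i, σ.SameCycle i i.swap) :
    A ^ orderOf σ = diagonal fun i => (-1) ^ (orderOf σ / Function.minimalPeriod σ i) := by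
  have hone : IsMonomial (A ^ orderOf σ) 1 := by
    simpa only [pow_orderOf_eq_one] using hA.pow (orderOf σ)
  rw [← hone.diagonal_diag]
  congr 1
  ext i
  have hfix : (σ ^ Function.minimalPeriod σ i) i = i := by
    rw [← Equiv.Perm.iterate_eq_pow, Function.iterate_minimalPeriod]
  have hdvd : Function.minimalPeriod σ i ∣ orderOf σ := MulAction.period_dvd_orderOf σ i
  rw [← hA.pow_minimalPeriod_apply_self hsp (hcyc i), ← (hA.pow _).pow_apply_self hfix, ← pow_mul,
    Nat.mul_div_cancel' hdvd, diag_apply]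

end IsMonomial

theorem stmt_11_general {l : Type*} [Fintype l] [DecidableEq l] (F : Type*) [Field F]
    (hF : ringChar F ≠ 2) (g : Matrix.symplecticGroup l F) (σ : Equiv.Perm (l ⊕ l))
    (hmon : IsMonomial (g : Matrix (l ⊕ l) (l ⊕ l) F) σ)
    (hτ : ∀ i : l ⊕ l, σ.SameCycle i (Equiv.sumComm l l i)) :
    (∃ c : F, (↑(g ^ orderOf σ) : Matrix (l ⊕ l) (l ⊕ l) F) = c • 1) ↔
      ∀ i j : l ⊕ l,
        padicValNat 2 (Function.minimalPeriod (⇑σ) i) =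
          padicValNat 2 (Function.minimalPeriod (⇑σ) j) := by
  have hne : (-1 : F) ≠ 1 := Ring.neg_one_ne_one_of_char_ne_two hF
  have hσ : IsOfFinOrder σ := isOfFinOrder_of_finite σ
  rw [SubmonoidClass.coe_pow, hmon.pow_orderOf_eq_diagonal g.2 hτ]
  simp only [smul_one_eq_diagonal, diagonal_eq_diagonal_iff]
  -- `MulAction.period σ i` unfolds to `Function.minimalPeriod σ i`.
  refine Iff.trans ?_ (forall_padicValNat_period_eq_iff hσ).symm
  simp only [Nat.two_dvd_ne_zero, ← Nat.odd_iff]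
  constructor
  · rintro ⟨c, hc⟩ i
    have : Nonempty (l ⊕ l) := ⟨i⟩
    obtain ⟨i₀, hi₀⟩ := exists_not_dvd_orderOf_div_period (α := l ⊕ l) hσ (p := 2) (by decide)
    rw [Nat.two_dvd_ne_zero, ← Nat.odd_iff] at hi₀
    exact (neg_one_pow_eq_neg_one_iff_odd hne).1
      (((hc i).trans (hc i₀).symm).trans hi₀.neg_one_pow)
  · exact fun hodd => ⟨-1, fun i => (hodd i).neg_one_pow⟩

/-- If `char F ≠ 2` and `g ∈ Sp(2n,F)` is monomial with all permutation orbits invariant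
under the swap of the two blocks, then `g ^ k` (`k` the order of the permutation `σ`) is a
scalar matrix if and only if the cardinalities of the orbits of `σ` (i.e. the minimal
periods of `σ` at the various indices) all have the same `2`-adic valuation. -/
theorem stmt_11 (F : Type*) [Field F] (hF : ringChar F ≠ 2) (n : ℕ) (hn : 1 ≤ n)
    (g : Matrix.symplecticGroup (Fin n) F) (σ : Equiv.Perm (Fin n ⊕ Fin n))
    (hmon : IsMonomial (g : Matrix (Fin n ⊕ Fin n) (Fin n ⊕ Fin n) F) σ)
    (hτ : ∀ i : Fin n ⊕ Fin n, σ.SameCycle i (Equiv.sumComm (Fin n) (Fin n) i)) :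
    (∃ c : F, (↑(g ^ orderOf σ) : Matrix (Fin n ⊕ Fin n) (Fin n ⊕ Fin n) F) = c • 1) ↔
      ∀ i j : Fin n ⊕ Fin n,
        padicValNat 2 (Function.minimalPeriod (⇑σ) i) =
          padicValNat 2 (Function.minimalPeriod (⇑σ) j) :=
  stmt_11_general F hF g σ hmon hτ
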